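/- arXiv:2111.07493 — 4 statements merged into one kernel-verified Lean document; each statement's English description precedes it below -/
import Mathlib

section
/- Let q be a positive integer and let a₁,…,a_q and u₁,…,u_q be real numbers with |u₁| > |u₂| > … > |u_q| > 0 (in particular each u_p is nonzero). Let (b_s)_{s≥1} and (v_s)_{s≥1} be sequences of real numbers such that the sequence (|v_s|)_{s≥1} is strictly decreasing, and suppose that for every integer n > 0 the series Σ_{s=1}^∞ b_s·v_sⁿ converges absolutely and Σ_{p=1}^q n·a_p·u_pⁿ = Σ_{s=1}^∞ b_s·v_sⁿ. Then a_p = 0 for all p = 1,…,q. -/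
open Polynomial Filter Topology

/-- Linear extension to all polynomials of a moment identity between a combination of
derivatives at points `u p` and a series of point masses at `v s`. -/
theorem hasSum_eval_of_moments {ι : Type*} [Fintype ι] {a u : ι → ℝ} {b v : ℕ → ℝ}
    (h : ∀ n : ℕ, 0 < n → HasSum (fun s => b s * v s ^ n) (∑ p, (n : ℝ) * a p * u p ^ n))
    (P : ℝ[X]) :
    HasSum (fun s => b s * v s * P.eval (v s))
      (∑ p, a p * u p * (derivative (X * P)).eval (u p)) := by
  induction P using Polynomial.induction_on' with
  | add P Q hP hQ =>
    convert hP.add hQ using 1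
    · ext s
      simp only [eval_add]
      ring
    · rw [← Finset.sum_add_distrib]
      refine Finset.sum_congr rfl fun p _ => ?_
      simp only [mul_add, derivative_add, eval_add]
  | monomial n c =>
    have hterm : (fun s => b s * v s * (monomial n c).eval (v s)) =
        fun s => c * (b s * v s ^ (n + 1)) := by
      ext s
      simp only [eval_monomial]
      ring
    have hsum : ∑ p, a p * u p * (derivative (X * monomial n c)).eval (u p) =
        c * ∑ p, ((n + 1 : ℕ) : ℝ) * a p * u p ^ (n + 1) := by
      rw [Finset.mul_sum]
      refine Finset.sum_congr rfl fun p _ => ?_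
      rw [X_mul_monomial, derivative_monomial, eval_monomial]
      simp only [Nat.add_sub_cancel]
      ring
    rw [hterm, hsum]
    exact (h (n + 1) n.succ_pos).mul_left c

theorem eval_derivative_X_sub_C_mul (x : ℝ) (H : ℝ[X]) :
    (derivative ((X - C x) * H)).eval x = H.eval x := by
  simp [derivative_mul]

/-- If a combination of derivatives at the distinct points `u p` has the moments of an absolutely
convergent series of point masses in a bounded set, then it vanishes. -/
theorem eq_zero_of_hasSum_moments {ι : Type*} [Fintype ι] {a u : ι → ℝ}
    (hu : Function.Injective u) (hu0 : ∀ p, u p ≠ 0) {b v : ℕ → ℝ} {R : ℝ}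
    (hv : ∀ s, |v s| ≤ R) (hbv : Summable fun s => |b s * v s|)
    (h : ∀ n : ℕ, 0 < n → HasSum (fun s => b s * v s ^ n) (∑ p, (n : ℝ) * a p * u p ^ n))
    (p₀ : ι) : a p₀ = 0 := by
  classical
  set Q : ℝ[X] := ∏ p ∈ Finset.univ.erase p₀, (X - C (u p)) ^ 2 with hQ
  have hQ0 : Q.eval (u p₀) ≠ 0 := by
    rw [hQ, eval_prod, Finset.prod_ne_zero_iff]
    intro p hp
    simpa [sub_eq_zero] using fun hup => Finset.ne_of_mem_erase hp (hu hup).symm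
  set D : ℝ[X] := (X - C (u p₀)) * Q with hD
  obtain ⟨K, hK⟩ : ∃ K, ∀ x ∈ Set.Icc (-R) R, ‖D.eval x‖ ≤ K :=
    isCompact_Icc.exists_bound_of_continuousOn D.continuous.continuousOn
  have hR : 0 ≤ R := (abs_nonneg _).trans (hv 0)
  set M : ℝ := R + |u p₀| + 1 with hM
  have hM0 : 0 < M := by positivity
  set E : ℝ[X] := 1 - C ((M ^ 2)⁻¹) * (X - C (u p₀)) ^ 2 with hE
  have hEeval (x : ℝ) : E.eval x = 1 - (x - u p₀) ^ 2 / M ^ 2 := by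
    simp only [hE, eval_sub, eval_one, eval_mul, eval_C, eval_pow, eval_X]
    ring
  have hsq (s : ℕ) : (v s - u p₀) ^ 2 / M ^ 2 < 1 := by
    rw [div_lt_one (by positivity), sq_lt_sq, abs_of_pos hM0]
    linarith [abs_sub (v s) (u p₀), hv s]
  have hE0 (s : ℕ) : 0 ≤ E.eval (v s) := by
    rw [hEeval]
    linarith [hsq s]
  have hE1 (s : ℕ) : E.eval (v s) ≤ 1 := by
    rw [hEeval]
    linarith [show 0 ≤ (v s - u p₀) ^ 2 / M ^ 2 by positivity]
  have hleft (k : ℕ) : ∑ p, a p * u p * (derivative (X * (D * E ^ k))).eval (u p) =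
      a p₀ * u p₀ * (u p₀ * Q.eval (u p₀)) := by
    rw [Finset.sum_eq_single p₀]
    · rw [show X * (D * E ^ k) = (X - C (u p₀)) * (X * Q * E ^ k) by rw [hD]; ring,
        eval_derivative_X_sub_C_mul]
      simp [hEeval]
    · intro p _ hp
      obtain ⟨H, hH⟩ : (X - C (u p)) ^ 2 ∣ Q :=
        Finset.dvd_prod_of_mem _ (Finset.mem_erase.2 ⟨hp, Finset.mem_univ p⟩)
      rw [show X * (D * E ^ k) =
          (X - C (u p)) * ((X - C (u p)) * (X * (X - C (u p₀)) * H * E ^ k)) by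
            rw [hD, hH]; ring, eval_derivative_X_sub_C_mul]
      simp
    · simp
  have hterm (s : ℕ) :
      Tendsto (fun k : ℕ => b s * v s * (D * E ^ k).eval (v s)) atTop (𝓝 0) := by
    simp only [eval_mul, eval_pow]
    rcases eq_or_ne (v s) (u p₀) with hs | hs
    · simp [hD, hs]
    · have hlt : E.eval (v s) < 1 := by
        have := sub_ne_zero.2 hs
        rw [hEeval]
        linarith [show 0 < (v s - u p₀) ^ 2 / M ^ 2 by positivity]
      simpa using ((tendsto_pow_atTop_nhds_zero_of_lt_one (hE0 s) hlt).const_mul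
        (D.eval (v s))).const_mul (b s * v s)
  have hlim := tendsto_tsum_of_dominated_convergence (hbv.mul_right K) hterm
    (Eventually.of_forall fun k s => by
      rw [norm_mul, Real.norm_eq_abs (b s * v s), eval_mul, eval_pow, norm_mul]
      have hpow : ‖E.eval (v s) ^ k‖ ≤ 1 := by
        rw [Real.norm_of_nonneg (pow_nonneg (hE0 s) k)]
        exact pow_le_one₀ (hE0 s) (hE1 s)
      gcongr
      exact (mul_le_of_le_one_right (norm_nonneg _) hpow).trans (hK _ (abs_le.1 (hv s))))
  simp only [(hasSum_eval_of_moments h _).tsum_eq, hleft, tsum_zero] at hlim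
  simpa [hu0 p₀, hQ0] using tendsto_nhds_unique tendsto_const_nhds hlim

/-- **Lemma 5.16 of Bridgeman–Canary–Sambarino.**
If `∑_{p=1}^q n a_p u_p^n = ∑_{s=1}^∞ b_s v_s^n` for all positive integers `n`,
where `|u₁| > … > |u_q| > 0`, each `u_p ≠ 0`, `(|v_s|)` is strictly decreasing, and the
right-hand series converges absolutely, then all `a_p` vanish. -/
theorem technical_lemma (q : ℕ) (hq : 0 < q) (a u : Fin q → ℝ)
    (hu : StrictAnti fun p => |u p|) (hu0 : ∀ p, u p ≠ 0)
    (b v : ℕ → ℝ) (hv : StrictAnti fun s => |v s|)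
    (habs : ∀ n : ℕ, 0 < n → Summable fun s => |b s * v s ^ n|)
    (heq : ∀ n : ℕ, 0 < n → ∑ p, (n : ℝ) * a p * u p ^ n = ∑' s, b s * v s ^ n) :
    ∀ p, a p = 0 := by
  have habs_le (s : ℕ) : |v s| ≤ |v 0| := hv.antitone s.zero_le
  refine eq_zero_of_hasSum_moments (fun p r hpr => hu.injective (congrArg abs hpr)) hu0 habs_le
    (by simpa using habs 1 one_pos) fun n hn => ?_
  rw [heq n hn]
  exact (habs n hn).of_abs.hasSum
end

section
/- Let d ≥ 1 and let (a₁,…,a_d) and (b₁,…,b_d) be two bases of ℝ^d such that any d distinct vectors chosen among the list a₁,…,a_d,b₁,…,b_d are linearly independent. For each i let pᵢ : ℝ^d → ℝ^d be the linear projection with range span(aᵢ) and kernel span{aₖ : k ≠ i}, and for each j let qⱼ be the linear projection with range span(bⱼ) and kernel span{bₖ : k ≠ j}. Then tr(pᵢ ∘ qⱼ) ≠ 0 for all i, j ∈ {1,…,d}. -/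
/-- An endomorphism `q` with range `span {v}`, `v ≠ 0`, satisfies `tr (p ∘ q) ≠ 0` as soon as
`q (p v) ≠ 0`. -/
theorem trace_comp_ne_zero_of_range_eq_span_singleton {K V : Type*} [Field K] [AddCommGroup V]
    [Module K V] [FiniteDimensional K V] {p q : V →ₗ[K] V} {v : V} (hv : v ≠ 0)
    (hq : LinearMap.range q = K ∙ v) (h : q (p v) ≠ 0) :
    LinearMap.trace K V (p ∘ₗ q) ≠ 0 := by
  have hmem : ∀ x, q x ∈ K ∙ v := fun x => hq ▸ LinearMap.mem_range_self q x
  let φ : V →ₗ[K] K := (LinearEquiv.coord K V v hv).toLinearMap ∘ₗ q.codRestrict (K ∙ v) hmem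
  have hφ : ∀ x, φ x • v = q x := fun x =>
    LinearEquiv.coord_apply_smul K V v hv ⟨q x, hmem x⟩
  have hpq : p ∘ₗ q = φ.smulRight (p v) := by
    ext x
    simp [← hφ]
  rw [hpq, LinearMap.trace_smulRight]
  intro h0
  exact h (by rw [← hφ, h0, zero_smul])

/-- If replacing the `i`-th entry of `a` by `x` gives a linearly independent family, then `x` is
not in the span of the other entries of `a`. -/
theorem notMem_span_image_ne_of_linearIndependent_update {ι K V : Type*} [DecidableEq ι] [Field K]
    [AddCommGroup V] [Module K V] {a : ι → V} {i : ι} {x : V}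
    (h : LinearIndependent K (Function.update a i x)) :
    x ∉ Submodule.span K (a '' {k | k ≠ i}) := by
  have hx := h.notMem_span_image (s := {k | k ≠ i}) (x := i) (by simp)
  have himage : Function.update a i x '' {k | k ≠ i} = a '' {k | k ≠ i} :=
    Set.image_congr fun k hk => Function.update_of_ne hk x a
  rwa [Function.update_self, himage] at hx

/-- Updating an injective function at one point by a value outside its range keeps it injective. -/
theorem Function.Injective.update_of_notMem_range {α β : Type*} [DecidableEq α] {f : α → β}
    (hf : Function.Injective f) (i : α) {y : β} (hy : y ∉ Set.range f) :
    Function.Injective (Function.update f i y) := by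
  intro k l hkl
  rw [Set.mem_range, not_exists] at hy
  simp only [Function.update_apply] at hkl
  split_ifs at hkl with hk hl hl
  · rw [hk, hl]
  · exact absurd hkl.symm (hy l)
  · exact absurd hkl (hy k)
  · exact hf hkl

/-- Let `(a₁, …, a_d)` and `(b₁, …, b_d)` be two bases of `ℝ^d` such that any `d`
distinct vectors chosen among `a₁, …, a_d, b₁, …, b_d` are linearly independent.
If `pᵢ` is the projection with range `span (aᵢ)` and kernel `span {aₖ : k ≠ i}`, and
`qⱼ` is the projection with range `span (bⱼ)` and kernel `span {bₖ : k ≠ j}`, then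
`tr (pᵢ ∘ qⱼ) ≠ 0` for all `i, j`. -/
theorem trace_projections_ne_zero (d : ℕ) (hd : 1 ≤ d)
    (a b : Fin d → (Fin d → ℝ))
    (ha : LinearIndependent ℝ a) (hb : LinearIndependent ℝ b)
    (haspan : Submodule.span ℝ (Set.range a) = ⊤)
    (hbspan : Submodule.span ℝ (Set.range b) = ⊤)
    (hgen : ∀ c : Fin d → (Fin d ⊕ Fin d), Function.Injective c →
      LinearIndependent ℝ fun i => Sum.elim a b (c i))
    (i j : Fin d)
    (p q : (Fin d → ℝ) →ₗ[ℝ] (Fin d → ℝ))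
    (hpp : p ∘ₗ p = p)
    (hpr : LinearMap.range p = ℝ ∙ a i)
    (hpk : LinearMap.ker p = Submodule.span ℝ (a '' {k | k ≠ i}))
    (hqq : q ∘ₗ q = q)
    (hqr : LinearMap.range q = ℝ ∙ b j)
    (hqk : LinearMap.ker q = Submodule.span ℝ (b '' {k | k ≠ j})) :
    LinearMap.trace ℝ (Fin d → ℝ) (p ∘ₗ q) ≠ 0 := by
  have hp : p (b j) ≠ 0 := by
    rw [ne_eq, ← LinearMap.mem_ker, hpk]
    apply notMem_span_image_ne_of_linearIndependent_update
    have h := hgen (Function.update Sum.inl i (Sum.inr j))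
      (Sum.inl_injective.update_of_notMem_range i (by simp))
    rwa [← Function.comp_def, Function.comp_update, Sum.elim_comp_inl] at h
  have hq : q (a i) ≠ 0 := by
    rw [ne_eq, ← LinearMap.mem_ker, hqk]
    apply notMem_span_image_ne_of_linearIndependent_update
    have h := hgen (Function.update Sum.inr j (Sum.inl i))
      (Sum.inr_injective.update_of_notMem_range j (by simp))
    rwa [← Function.comp_def, Function.comp_update, Sum.elim_comp_inr] at h
  obtain ⟨c, hc⟩ := Submodule.mem_span_singleton.mp (hpr ▸ LinearMap.mem_range_self p (b j))
  refine trace_comp_ne_zero_of_range_eq_span_singleton (hb.ne_zero j) hqr ?_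
  rw [← hc, map_smul]
  refine smul_ne_zero ?_ hq
  rintro rfl
  exact hp (by rw [← hc, zero_smul])
end

section
/- Let A and B be invertible d×d real matrices admitting proximal decompositions A = L₁·p₁ + … + L_d·p_d and B = M₁·q₁ + … + M_d·q_d. Then the sequence λ₁(Aⁿ·Bⁿ)/(λ₁(Aⁿ)·λ₁(Bⁿ)) converges to |tr(p₁·q₁)| as n → ∞. -/
open scoped BigOperators

/-- The spectral radius of a real `d × d` matrix: the maximum of the absolute values of
its complex eigenvalues, i.e. `λ₁(C)`. -/
noncomputable def specRad {d : ℕ} (C : Matrix (Fin d) (Fin d) ℝ) : ℝ :=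
  (spectralRadius ℂ (C.map (Complex.ofReal))).toReal

/-- `λ_d(C) = λ₁(C⁻¹)⁻¹`, the smallest absolute value of a complex eigenvalue of an
invertible matrix `C`. -/
noncomputable def lamLast {d : ℕ} (C : Matrix (Fin d) (Fin d) ℝ) : ℝ :=
  (specRad C⁻¹)⁻¹

/-- A proximal decomposition `A = L₁ p₁ + ⋯ + L_d p_d` of a `d × d` real matrix:
`|L₁| > |L₂| > ⋯ > |L_d| > 0` and the `pᵢ` are rank-one projections with
`pᵢ pⱼ = 0` for `i ≠ j`, `pᵢ² = pᵢ` and `p₁ + ⋯ + p_d = 1`. -/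
structure ProximalDecomp {d : ℕ} (A : Matrix (Fin d) (Fin d) ℝ) where
  L : Fin d → ℝ
  p : Fin d → Matrix (Fin d) (Fin d) ℝ
  strictAnti : StrictAnti fun i => |L i|
  abs_pos : ∀ i, 0 < |L i|
  rank_one : ∀ i, (p i).rank = 1
  mul_eq_zero : ∀ i j, i ≠ j → p i * p j = 0
  idem : ∀ i, p i * p i = p i
  sum_eq_one : ∑ i, p i = 1
  decomp : A = ∑ i, L i • p i

section SpecRadContinuity

open Filter
open scoped Topology Matrix.Norms.Operator

/-- The geometric sequence with the larger ratio eventually beats any multiple of the other. -/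
lemma exists_mul_pow_lt_pow {a b : ℝ} (ha : 0 ≤ a) (hab : a < b) (K : ℝ) :
    ∃ k : ℕ, K * a ^ (k + 1) < b ^ (k + 1) := by
  have hb : 0 < b := ha.trans_lt hab
  have h : Tendsto (fun k : ℕ => K * (a / b) ^ (k + 1)) atTop (𝓝 (K * 0)) :=
    ((tendsto_pow_atTop_nhds_zero_of_lt_one (by positivity)
      ((div_lt_one hb).2 hab)).comp (tendsto_add_atTop_nat 1)).const_mul K
  rw [mul_zero] at h
  obtain ⟨k, hk⟩ := (h.eventually_lt_const one_pos).exists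
  refine ⟨k, ?_⟩
  rw [div_pow, mul_div_assoc', div_lt_one (by positivity)] at hk
  exact hk

section SpectralRadius

variable {d : ℕ}

lemma norm_le_specRad {C : Matrix (Fin d) (Fin d) ℝ} {z : ℂ}
    (hz : z ∈ spectrum ℂ (C.map Complex.ofReal)) : ‖z‖ ≤ specRad C := by
  have : Nonempty (Fin d) := by
    by_contra h
    rw [not_nonempty_iff] at h
    rw [spectrum.of_subsingleton] at hz
    exact hz
  obtain ⟨w, -, hw⟩ := spectrum.exists_nnnorm_eq_spectralRadius (C.map Complex.ofReal)
  have h : (‖z‖₊ : ENNReal) ≤ spectralRadius ℂ (C.map Complex.ofReal) :=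
    le_iSup₂ (f := fun (k : ℂ) (_ : k ∈ spectrum ℂ (C.map Complex.ofReal)) =>
      (‖k‖₊ : ENNReal)) z hz
  have := ENNReal.toReal_mono (by rw [← hw]; exact ENNReal.coe_ne_top) h
  simpa [specRad] using this

lemma exists_norm_eq_specRad [NeZero d] (C : Matrix (Fin d) (Fin d) ℝ) :
    ∃ z ∈ spectrum ℂ (C.map Complex.ofReal), ‖z‖ = specRad C := by
  obtain ⟨w, hw, h⟩ := spectrum.exists_nnnorm_eq_spectralRadius (C.map Complex.ofReal)
  exact ⟨w, hw, by simp [specRad, ← h]⟩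

lemma specRad_nonneg (C : Matrix (Fin d) (Fin d) ℝ) : 0 ≤ specRad C :=
  ENNReal.toReal_nonneg

lemma map_ofReal_pow (C : Matrix (Fin d) (Fin d) ℝ) (k : ℕ) :
    (C ^ k).map Complex.ofReal = C.map Complex.ofReal ^ k :=
  Matrix.map_pow C Complex.ofRealHom k

lemma specRad_pow [NeZero d] (C : Matrix (Fin d) (Fin d) ℝ) (k : ℕ) :
    specRad (C ^ k) = specRad C ^ k := by
  apply le_antisymm
  · obtain ⟨z, hz, h⟩ := exists_norm_eq_specRad (C ^ k)
    rw [map_ofReal_pow, spectrum.map_pow_of_nonempty (spectrum.nonempty _)] at hz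
    obtain ⟨w, hw, rfl⟩ := hz
    rw [← h, norm_pow]
    exact pow_le_pow_left₀ (norm_nonneg _) (norm_le_specRad hw) k
  · obtain ⟨z, hz, h⟩ := exists_norm_eq_specRad C
    rw [← h, ← norm_pow]
    apply norm_le_specRad
    rw [map_ofReal_pow]
    exact spectrum.pow_mem_pow _ k hz

lemma specRad_smul [NeZero d] (c : ℝ) (C : Matrix (Fin d) (Fin d) ℝ) :
    specRad (c • C) = |c| * specRad C := by
  have hmap : (c • C).map Complex.ofReal = (c : ℂ) • C.map Complex.ofReal := by
    ext i j; simp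
  have hspec := spectrum.smul_eq_smul (c : ℂ) (C.map Complex.ofReal) (spectrum.nonempty _)
  apply le_antisymm
  · obtain ⟨z, hz, h⟩ := exists_norm_eq_specRad (c • C)
    rw [hmap, hspec] at hz
    obtain ⟨w, hw, rfl⟩ := hz
    rw [← h]
    simpa using mul_le_mul_of_nonneg_left (norm_le_specRad hw) (abs_nonneg c)
  · obtain ⟨z, hz, h⟩ := exists_norm_eq_specRad C
    have : ‖(c : ℂ) • z‖ ≤ specRad (c • C) := by
      apply norm_le_specRad
      rw [hmap, hspec]
      exact Set.smul_mem_smul_set hz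
    simpa [h] using this

lemma specRad_le_norm_mul [NeZero d] (C : Matrix (Fin d) (Fin d) ℝ) :
    specRad C ≤ ‖C.map Complex.ofReal‖ * ‖(1 : Matrix (Fin d) (Fin d) ℂ)‖ := by
  obtain ⟨z, hz, h⟩ := exists_norm_eq_specRad C
  rw [← h]
  exact spectrum.norm_le_norm_mul_of_mem hz

lemma abs_trace_le_mul_specRad (C : Matrix (Fin d) (Fin d) ℝ) :
    |C.trace| ≤ d * specRad C := by
  have htr : (C.map Complex.ofReal).trace = (C.trace : ℂ) := by
    simp [Matrix.trace]
  have hcard : (C.map Complex.ofReal).charpoly.roots.card ≤ d := by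
    simpa using (Polynomial.card_roots' (C.map Complex.ofReal).charpoly).trans_eq
      (Matrix.charpoly_natDegree_eq_dim _)
  have hroot : ∀ x ∈ (C.map Complex.ofReal).charpoly.roots.map norm, x ≤ specRad C := by
    intro x hx
    obtain ⟨z, hz, rfl⟩ := Multiset.mem_map.1 hx
    exact norm_le_specRad
      (Matrix.mem_spectrum_of_isRoot_charpoly (Polynomial.isRoot_of_mem_roots hz))
  calc |C.trace| = ‖(C.map Complex.ofReal).charpoly.roots.sum‖ := by
        rw [← Matrix.trace_eq_sum_roots_charpoly, htr, Complex.norm_real, Real.norm_eq_abs]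
    _ ≤ ((C.map Complex.ofReal).charpoly.roots.map norm).sum := norm_multiset_sum_le _
    _ ≤ ((C.map Complex.ofReal).charpoly.roots.map norm).card • specRad C :=
        Multiset.sum_le_card_nsmul _ _ hroot
    _ ≤ d * specRad C := by
        rw [nsmul_eq_mul, Multiset.card_map]
        gcongr
        exact specRad_nonneg C

/-- The spectral radius is continuous at every matrix `R` with `R² = tr(R) R`. -/
lemma tendsto_specRad_of_mul_self_eq_trace_smul [NeZero d] {ι : Type*} {l : Filter ι}
    {X : ι → Matrix (Fin d) (Fin d) ℝ} {R : Matrix (Fin d) (Fin d) ℝ}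
    (hR : R * R = R.trace • R) (hX : Tendsto X l (𝓝 R)) :
    Tendsto (fun n => specRad (X n)) l (𝓝 |R.trace|) := by
  have hpow (k : ℕ) : R ^ (k + 1) = R.trace ^ k • R := by
    induction k with
    | zero => simp
    | succ k ih => rw [pow_succ, ih, smul_mul_assoc, hR, smul_smul, pow_succ]
  rw [tendsto_order]
  constructor
  · intro a ha
    rcases lt_or_ge a 0 with h0 | h0
    · exact Eventually.of_forall fun n => h0.trans_le (specRad_nonneg _)
    obtain ⟨k, hk⟩ := exists_mul_pow_lt_pow h0 ha d
    have htend : Tendsto (fun n => |(X n ^ (k + 1)).trace|) l (𝓝 (|R.trace| ^ (k + 1))) := by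
      have hc : Continuous fun Y : Matrix (Fin d) (Fin d) ℝ => |(Y ^ (k + 1)).trace| := by
        fun_prop
      have := (hc.tendsto R).comp hX
      simpa [hpow, Matrix.trace_smul, abs_mul, abs_pow, pow_succ, Function.comp_def] using this
    filter_upwards [htend.eventually_const_lt hk] with n hn
    have hle := abs_trace_le_mul_specRad (X n ^ (k + 1))
    rw [specRad_pow] at hle
    exact lt_of_pow_lt_pow_left₀ (k + 1) (specRad_nonneg _)
      (lt_of_mul_lt_mul_left (hn.trans_le hle) (Nat.cast_nonneg d))
  · intro b hb
    obtain ⟨c, hc, hcb⟩ := exists_between hb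
    have hc0 : 0 < c := (abs_nonneg _).trans_lt hc
    set K : ℝ := ‖R.map Complex.ofReal‖ * ‖(1 : Matrix (Fin d) (Fin d) ℂ)‖
    have hK : 0 ≤ K := by positivity
    obtain ⟨k, hk⟩ := exists_mul_pow_lt_pow hc0.le hcb (K / c)
    have hk' : |R.trace| ^ k * K < b ^ (k + 1) := by
      refine lt_of_le_of_lt ?_ hk
      calc |R.trace| ^ k * K ≤ c ^ k * K := by gcongr
        _ = K / c * c ^ (k + 1) := by field_simp; ring
    have htend : Tendsto (fun n => ‖(X n ^ (k + 1)).map Complex.ofReal‖ *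
        ‖(1 : Matrix (Fin d) (Fin d) ℂ)‖) l (𝓝 (|R.trace| ^ k * K)) := by
      have hcont : Continuous fun Y : Matrix (Fin d) (Fin d) ℝ =>
          ‖(Y ^ (k + 1)).map Complex.ofReal‖ * ‖(1 : Matrix (Fin d) (Fin d) ℂ)‖ :=
        ((((continuous_id.pow (k + 1)).matrix_map Complex.continuous_ofReal).norm).mul
          continuous_const)
      have hRk : (R ^ (k + 1)).map Complex.ofReal =
          ((R.trace : ℂ) ^ k) • R.map Complex.ofReal := by
        ext i j; simp [hpow]
      have := (hcont.tendsto R).comp hX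
      rw [hRk, norm_smul, norm_pow, Complex.norm_real, Real.norm_eq_abs, mul_assoc] at this
      exact this
    filter_upwards [htend.eventually_lt_const hk'] with n hn
    have hle := specRad_le_norm_mul (X n ^ (k + 1))
    rw [specRad_pow] at hle
    exact lt_of_pow_lt_pow_left₀ (k + 1) (hc0.trans hcb).le (hle.trans_lt hn)

end SpectralRadius

lemma Matrix.exists_eq_vecMulVec_of_rank_le_one {m n K : Type*} [Fintype m] [Fintype n] [Field K]
    {P : Matrix m n K} (hP : P.rank ≤ 1) : ∃ u v, P = Matrix.vecMulVec u v := by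
  classical
  obtain ⟨w, hw⟩ := finrank_le_one_iff.1 hP
  choose c hc using fun j => hw ⟨P.mulVecLin (Pi.single j 1), LinearMap.mem_range_self _ _⟩
  refine ⟨w, c, ?_⟩
  ext i j
  have := congrFun (congrArg Subtype.val (hc j)) i
  simp [Matrix.vecMulVec_apply] at this ⊢
  rw [← this, mul_comm]

lemma Matrix.mul_mul_self_eq_trace_smul_of_rank_le_one {n K : Type*} [Fintype n] [Field K]
    {P : Matrix n n K} (hP : P.rank ≤ 1) (M : Matrix n n K) :
    P * M * P = (P * M).trace • P := by
  obtain ⟨u, v, rfl⟩ := Matrix.exists_eq_vecMulVec_of_rank_le_one hP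
  rw [Matrix.vecMulVec_mul, Matrix.vecMulVec_mul_vecMulVec, Matrix.trace_vecMulVec,
    dotProduct_comm, Matrix.vecMulVec_smul]

namespace ProximalDecomp

variable {d : ℕ} {A : Matrix (Fin d) (Fin d) ℝ}

lemma trace_p (D : ProximalDecomp A) (i : Fin d) : (D.p i).trace = 1 := by
  have h := Matrix.mul_mul_self_eq_trace_smul_of_rank_le_one (D.rank_one i).le 1
  rw [mul_one, D.idem] at h
  have hne : D.p i ≠ 0 := by
    intro h0
    simpa [h0] using D.rank_one i
  exact smul_left_injective ℝ hne (by simpa using h.symm)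

lemma pow_eq_sum (D : ProximalDecomp A) (n : ℕ) : A ^ n = ∑ i, D.L i ^ n • D.p i := by
  induction n with
  | zero => simp [D.sum_eq_one]
  | succ n ih =>
    have hmul : A ^ (n + 1) = (∑ i, D.L i ^ n • D.p i) * ∑ i, D.L i • D.p i := by
      rw [pow_succ, ih, ← D.decomp]
    rw [hmul, Finset.sum_mul_sum]
    refine Finset.sum_congr rfl fun i _ => ?_
    rw [Finset.sum_eq_single i]
    · rw [smul_mul_smul_comm, D.idem, pow_succ]
    · intro j _ hj
      rw [smul_mul_smul_comm, D.mul_eq_zero i j hj.symm, smul_zero]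
    · simp

lemma tendsto_inv_pow_smul_pow (D : ProximalDecomp A) (hd : 0 < d) :
    Tendsto (fun n : ℕ => (D.L ⟨0, hd⟩ ^ n)⁻¹ • A ^ n) atTop (𝓝 (D.p ⟨0, hd⟩)) := by
  have h0 : D.L ⟨0, hd⟩ ≠ 0 := _root_.abs_pos.1 (D.abs_pos _)
  have hsum : D.p ⟨0, hd⟩ = ∑ i, (if i = ⟨0, hd⟩ then (1 : ℝ) else 0) • D.p i := by
    simp
  rw [hsum]
  simp_rw [D.pow_eq_sum, Finset.smul_sum, smul_smul]
  refine tendsto_finsetSum _ fun i _ => Tendsto.smul_const ?_ _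
  have hq (n : ℕ) : (D.L ⟨0, hd⟩ ^ n)⁻¹ * D.L i ^ n = (D.L i / D.L ⟨0, hd⟩) ^ n := by
    rw [div_pow, div_eq_inv_mul]
  simp_rw [hq]
  split_ifs with hi
  · simp [hi, h0]
  · apply tendsto_pow_atTop_nhds_zero_of_abs_lt_one
    rw [abs_div, div_lt_one (D.abs_pos _)]
    exact D.strictAnti (Fin.lt_def.2 (Nat.pos_of_ne_zero fun h => hi (Fin.ext h)))

end ProximalDecomp

end SpecRadContinuity

open Filter in
/-- If `A` and `B` are invertible `d × d` real matrices with proximal decompositions,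
then `λ₁(Aⁿ Bⁿ) / (λ₁(Aⁿ) λ₁(Bⁿ)) → |tr (p₁ q₁)|` as `n → ∞`. -/
theorem specRad_prod_tendsto (d : ℕ) (hd : 0 < d)
    (A B : Matrix (Fin d) (Fin d) ℝ) (hA : IsUnit A) (hB : IsUnit B)
    (DA : ProximalDecomp A) (DB : ProximalDecomp B) :
    Tendsto (fun n : ℕ =>
        specRad (A ^ n * B ^ n) / (specRad (A ^ n) * specRad (B ^ n))) atTop
      (nhds |(DA.p ⟨0, hd⟩ * DB.p ⟨0, hd⟩).trace|) := by
  have : NeZero d := ⟨hd.ne'⟩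
  have hL (n : ℕ) : DA.L ⟨0, hd⟩ ^ n ≠ 0 := pow_ne_zero n (abs_pos.1 (DA.abs_pos _))
  have hM (n : ℕ) : DB.L ⟨0, hd⟩ ^ n ≠ 0 := pow_ne_zero n (abs_pos.1 (DB.abs_pos _))
  have hXA := DA.tendsto_inv_pow_smul_pow hd
  have hXB := DB.tendsto_inv_pow_smul_pow hd
  have hsA := tendsto_specRad_of_mul_self_eq_trace_smul
    (by rw [DA.idem, DA.trace_p, one_smul]) hXA
  have hsB := tendsto_specRad_of_mul_self_eq_trace_smul
    (by rw [DB.idem, DB.trace_p, one_smul]) hXB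
  have hsAB := tendsto_specRad_of_mul_self_eq_trace_smul
    (by rw [← mul_assoc, Matrix.mul_mul_self_eq_trace_smul_of_rank_le_one (DA.rank_one _).le,
      smul_mul_assoc]) (hXA.mul hXB)
  rw [DA.trace_p, abs_one] at hsA
  rw [DB.trace_p, abs_one] at hsB
  have hlim := hsAB.div (hsA.mul hsB) (by norm_num)
  rw [mul_one, div_one] at hlim
  refine hlim.congr fun n => ?_
  have ha := abs_ne_zero.2 (inv_ne_zero (hL n))
  have hb := abs_ne_zero.2 (inv_ne_zero (hM n))
  simp only [Pi.div_apply, smul_mul_smul_comm, specRad_smul, abs_mul]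
  rw [mul_mul_mul_comm, mul_div_mul_left _ _ (mul_ne_zero ha hb)]
end

section
/- Let L₁, L₂, L₃, a₁, a₂, a₃ : ℝ → ℝ be functions differentiable at 0 with L₁(0) > L₂(0) > L₃(0) > 0. Suppose that L₁'(0)/L₁(0) = L₃'(0)/L₃(0), that L₂'(0)/L₂(0) = −2·L₁'(0)/L₁(0), that a₁(0) + a₂(0) + a₃(0) ≠ 0, and that there exists N ∈ ℕ such that for every integer n ≥ N the function t ↦ L₁(t)ⁿ·a₁(t) + L₂(t)ⁿ·a₂(t) + L₃(t)ⁿ·a₃(t) has derivative 0 at t = 0. Then L₁'(0) = L₂'(0) = L₃'(0) = 0. -/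
open Polynomial in
/-- A confluent exponential sum that vanishes for all large exponents vanishes against every
polynomial in the bases. -/
theorem sum_eval_add_derivative_eq_zero {ι K : Type*} [Fintype ι] [Field K] {x p q : ι → K}
    {N : ℕ} (h : ∀ n, N ≤ n → ∑ i, x i ^ n * (n * p i + q i) = 0) (P : K[X]) :
    ∑ i, x i ^ N * ((N * p i + q i) * P.eval (x i) + p i * x i * P.derivative.eval (x i)) = 0 := by
  induction P using Polynomial.induction_on' with
  | add P Q hP hQ =>
    rw [← add_zero (0 : K)]
    nth_rewrite 1 [← hP]
    rw [← hQ, ← Finset.sum_add_distrib]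
    refine Finset.sum_congr rfl fun i _ => ?_
    simp only [eval_add, derivative_add]
    ring
  | monomial k c =>
    have hk := congrArg (c * ·) (h (N + k) (Nat.le_add_right N k))
    simp only [mul_zero, Finset.mul_sum] at hk
    rw [← hk]
    refine Finset.sum_congr rfl fun i _ => ?_
    rw [derivative_monomial, eval_monomial, eval_monomial]
    cases k with
    | zero => simp; ring
    | succ k => push_cast; ring

open Polynomial in
/-- The linear coefficients of a confluent exponential sum with distinct nonzero bases vanish
as soon as the sum vanishes for all large exponents. -/
theorem linear_coeff_eq_zero_of_sum_pow_mul_eq_zero {ι K : Type*} [Fintype ι] [DecidableEq ι]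
    [Field K] {x p q : ι → K} (hx : Function.Injective x) (hx0 : ∀ i, x i ≠ 0) {N : ℕ}
    (h : ∀ n, N ≤ n → ∑ i, x i ^ n * (n * p i + q i) = 0) (i : ι) : p i = 0 := by
  set Q : K[X] := ∏ j ∈ Finset.univ.erase i, (X - C (x j)) ^ 2 with hQ
  have hQi : Q.eval (x i) ≠ 0 := by
    rw [hQ, eval_prod, Finset.prod_ne_zero_iff]
    intro j hj
    simpa [sub_eq_zero] using fun e => (Finset.ne_of_mem_erase hj) (hx e).symm
  have key := sum_eval_add_derivative_eq_zero h ((X - C (x i)) * Q)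
  rw [Finset.sum_eq_single i] at key
  · simpa [hx0 i, hQi] using key
  · intro j _ hj
    obtain ⟨R, hR⟩ : (X - C (x j)) ^ 2 ∣ Q :=
      Finset.dvd_prod_of_mem (fun j => (X - C (x j)) ^ 2)
        (Finset.mem_erase.2 ⟨hj, Finset.mem_univ j⟩)
    rw [hR]
    simp [derivative_pow]
  · simp

/-- Suppose `L₁, L₂, L₃, a₁, a₂, a₃ : ℝ → ℝ` are differentiable at `0` with
`L₁(0) > L₂(0) > L₃(0) > 0`, `L₁'(0)/L₁(0) = L₃'(0)/L₃(0)`,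
`L₂'(0)/L₂(0) = -2 L₁'(0)/L₁(0)`, and `a₁(0) + a₂(0) + a₃(0) ≠ 0`. If for all large `n`
the function `t ↦ L₁(t)ⁿ a₁(t) + L₂(t)ⁿ a₂(t) + L₃(t)ⁿ a₃(t)` has derivative `0` at
`t = 0`, then `L₁'(0) = L₂'(0) = L₃'(0) = 0`. -/
theorem derivative_eigenvalues_vanish
    (L₁ L₂ L₃ a₁ a₂ a₃ : ℝ → ℝ)
    (hL₁ : DifferentiableAt ℝ L₁ 0) (hL₂ : DifferentiableAt ℝ L₂ 0)
    (hL₃ : DifferentiableAt ℝ L₃ 0)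
    (ha₁ : DifferentiableAt ℝ a₁ 0) (ha₂ : DifferentiableAt ℝ a₂ 0)
    (ha₃ : DifferentiableAt ℝ a₃ 0)
    (h3pos : 0 < L₃ 0) (h32 : L₃ 0 < L₂ 0) (h21 : L₂ 0 < L₁ 0)
    (h13 : deriv L₁ 0 / L₁ 0 = deriv L₃ 0 / L₃ 0)
    (h2 : deriv L₂ 0 / L₂ 0 = -2 * (deriv L₁ 0 / L₁ 0))
    (hsum : a₁ 0 + a₂ 0 + a₃ 0 ≠ 0)
    (N : ℕ)
    (hder : ∀ n : ℕ, N ≤ n →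
      deriv (fun t => L₁ t ^ n * a₁ t + L₂ t ^ n * a₂ t + L₃ t ^ n * a₃ t) 0 = 0) :
    deriv L₁ 0 = 0 ∧ deriv L₂ 0 = 0 ∧ deriv L₃ 0 = 0 := by
  have hpos : ∀ i, 0 < ![L₁ 0, L₂ 0, L₃ 0] i := by
    intro i
    fin_cases i
    exacts [h3pos.trans (h32.trans h21), h3pos.trans h32, h3pos]
  have h1 : L₁ 0 ≠ 0 := (hpos 0).ne'
  have h2' : L₂ 0 ≠ 0 := (hpos 1).ne'
  have h3 : L₃ 0 ≠ 0 := (hpos 2).ne'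
  have hinj : Function.Injective ![L₁ 0, L₂ 0, L₃ 0] := by
    refine StrictAnti.injective (Fin.strictAnti_iff_succ_lt.2 fun i => ?_)
    fin_cases i
    exacts [h21, h32]
  set c := deriv L₁ 0 / L₁ 0 with hc
  have e1 : deriv L₁ 0 = c * L₁ 0 := by rw [hc]; field_simp
  have e2 : deriv L₂ 0 = -2 * c * L₂ 0 := by rw [← h2]; field_simp
  have e3 : deriv L₃ 0 = c * L₃ 0 := by rw [h13]; field_simp
  have hpow : ∀ (n : ℕ) (y : ℝ), n * y ^ (n - 1) * y = n * y ^ n := by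
    intro n y
    cases n with
    | zero => simp
    | succ n => rw [Nat.add_sub_cancel, pow_succ, mul_assoc]
  have key := linear_coeff_eq_zero_of_sum_pow_mul_eq_zero
    (p := ![c * a₁ 0, -2 * c * a₂ 0, c * a₃ 0]) (q := ![deriv a₁ 0, deriv a₂ 0, deriv a₃ 0])
    (N := N) hinj (fun i => (hpos i).ne') (by
      intro n hn
      have hd := (((hL₁.hasDerivAt.pow n).mul ha₁.hasDerivAt).add
        ((hL₂.hasDerivAt.pow n).mul ha₂.hasDerivAt)).add
        ((hL₃.hasDerivAt.pow n).mul ha₃.hasDerivAt)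
      have h0 := hd.deriv.symm.trans (hder n hn)
      simp only [Pi.pow_apply, e1, e2, e3] at h0
      simp only [Fin.sum_univ_three, Matrix.cons_val]
      linear_combination h0 - c * a₁ 0 * hpow n (L₁ 0) + 2 * c * a₂ 0 * hpow n (L₂ 0)
        - c * a₃ 0 * hpow n (L₃ 0))
  have k1 : c * a₁ 0 = 0 := key 0
  have k2 : -2 * c * a₂ 0 = 0 := key 1
  have k3 : c * a₃ 0 = 0 := key 2
  have hc0 : c = 0 := by
    refine (mul_eq_zero.1 ?_).resolve_right hsum
    linear_combination k1 - k2 / 2 + k3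
  simp [e1, e2, e3, hc0]
end
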